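/- Let h ∼ N(0, I_p) be a standard Gaussian vector, let β⁽ᵖ⁾ ∈ ℝᵖ be a converging sequence with (1/p)‖β⁽ᵖ⁾‖² → E[β²] < ∞, and let λ⁽ᵖ⁾ ∈ ℝᵖ be a converging sequence with nonnegative nondecreasing entries and (1/p)‖λ⁽ᵖ⁾‖² → E[λ²] < ∞. Then for all c ∈ ℝ and τ > 0: (i) the deterministic sequence F_p(c,τ) = (1/p)·E[ e_{J_{λ⁽ᵖ⁾}}(c·h + β⁽ᵖ⁾; τ) − J_{λ⁽ᵖ⁾}(β⁽ᵖ⁾) ] converges as p → ∞ to a finite limit F(c,τ); and (ii) the random variables (1/p)·[ e_{J_{λ⁽ᵖ⁾}}(c·h + β⁽ᵖ⁾; τ) − J_{λ⁽ᵖ⁾}(β⁽ᵖ⁾) ] converge in probability to F(c,τ) as p → ∞. -/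

import Mathlib

open MeasureTheory Filter Finset Topology ProbabilityTheory

/-- The nondecreasing rearrangement of the absolute values of the entries of `x`. -/
noncomputable def sortedAbs {p : ℕ} (x : Fin p → ℝ) : Fin p → ℝ :=
  fun i => |x (Tuple.sort (fun j => |x j|) i)|

/-- The sorted ℓ1 norm `J_λ(x) = ∑ λ_i |x|_(i)`. -/
noncomputable def sortedL1 {p : ℕ} (lam x : Fin p → ℝ) : ℝ :=
  ∑ i, lam i * sortedAbs x i

/-- The Moreau envelope `e_{J_λ}(x; τ) = min_v (1/(2τ))‖x − v‖² + J_λ(v)`. -/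
noncomputable def moreauJ {p : ℕ} (lam x : Fin p → ℝ) (τ : ℝ) : ℝ :=
  ⨅ v : Fin p → ℝ, ((1 / (2 * τ)) * ∑ i, (x i - v i) ^ 2 + sortedL1 lam v)

/-- The standard Gaussian measure `N(0, I_p)` on `ℝᵖ`. -/
noncomputable def gaussPi (p : ℕ) : Measure (Fin p → ℝ) :=
  Measure.pi fun _ => gaussianReal 0 1

/-- The empirical measures `(1/p) ∑ δ_{x_i}` of the sequence of vectors `x⁽ᵖ⁾` converge
weakly to the probability measure `μ` (tested against bounded continuous functions). -/
def EmpConverges (x : (p : ℕ) → Fin p → ℝ) (μ : Measure ℝ) : Prop :=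
  ∀ f : BoundedContinuousFunction ℝ ℝ,
    Tendsto (fun p => (∑ i, f (x p i)) / (p : ℝ)) atTop (𝓝 (∫ t, f t ∂μ))

lemma sortedAbs_mono {p : ℕ} (x : Fin p → ℝ) : Monotone (sortedAbs x) :=
  Tuple.monotone_sort (fun j => |x j|)

lemma sortedAbs_nonneg {p : ℕ} (x : Fin p → ℝ) (i : Fin p) : 0 ≤ sortedAbs x i := abs_nonneg _

lemma sum_sortedAbs {p : ℕ} (x : Fin p → ℝ) (f : ℝ → ℝ) :
    ∑ i, f (sortedAbs x i) = ∑ i, f |x i| :=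
  Equiv.sum_comp (Tuple.sort (fun j => |x j|)) (fun i => f |x i|)

lemma sum_sortedAbs_sq {p : ℕ} (x : Fin p → ℝ) :
    ∑ i, (sortedAbs x i) ^ 2 = ∑ i, (x i) ^ 2 := by
  rw [sum_sortedAbs x (fun t => t ^ 2)]
  simp

lemma sortedAbs_of_perm {p : ℕ} (w v : Fin p → ℝ) (σ : Equiv.Perm (Fin p))
    (hv : Monotone v) (h : ∀ i, |w i| = v (σ i)) : sortedAbs w = v := by
  have h1 : (fun j => |w j|) = v ∘ σ := by ext i; exact h i
  have h2 : sortedAbs w = (v ∘ σ) ∘ Tuple.sort (v ∘ σ) := by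
    ext i
    simp only [sortedAbs]
    rw [h1, h]
    rfl
  rw [h2, Tuple.comp_perm_comp_sort_eq_comp_sort, (Tuple.sort_eq_refl_iff_monotone).2 hv]
  rfl

lemma sum_mul_le_sortedAbs {p : ℕ} (x y : Fin p → ℝ) :
    ∑ i, x i * y i ≤ ∑ i, sortedAbs x i * sortedAbs y i := by
  set σ := Tuple.sort (fun j => |x j|) with hσ
  set ρ := Tuple.sort (fun j => |y j|) with hρ
  calc ∑ i, x i * y i ≤ ∑ i, |x i| * |y i| := by
        refine Finset.sum_le_sum fun i _ => ?_
        rw [← abs_mul]; exact le_abs_self _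
    _ = ∑ i, |x (σ i)| * |y (σ i)| := (Equiv.sum_comp σ (fun i => |x i| * |y i|)).symm
    _ = ∑ i, sortedAbs x i * sortedAbs y ((σ.trans ρ.symm) i) := by
        refine Finset.sum_congr rfl fun i _ => ?_
        simp [sortedAbs, ← hσ, ← hρ]
    _ ≤ ∑ i, sortedAbs x i * sortedAbs y i :=
        ((sortedAbs_mono x).monovary (sortedAbs_mono y)).sum_mul_comp_perm_le_sum_mul

lemma sortedAbs_dist {p : ℕ} (x y : Fin p → ℝ) :
    ∑ i, (sortedAbs x i - sortedAbs y i) ^ 2 ≤ ∑ i, (x i - y i) ^ 2 := by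
  have e1 : ∀ a b : Fin p → ℝ, ∑ i, (a i - b i) ^ 2
      = ∑ i, (a i) ^ 2 + ∑ i, (b i) ^ 2 - 2 * ∑ i, a i * b i := by
    intro a b
    rw [Finset.mul_sum, ← Finset.sum_add_distrib, ← Finset.sum_sub_distrib]
    exact Finset.sum_congr rfl fun i _ => by ring
  rw [e1, e1, sum_sortedAbs_sq, sum_sortedAbs_sq]
  linarith [sum_mul_le_sortedAbs x y]

lemma continuous_sortedAbs {p : ℕ} : Continuous (sortedAbs : (Fin p → ℝ) → Fin p → ℝ) := by
  refine continuous_pi fun i => ?_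
  rw [continuous_iff_continuousAt]
  intro x
  rw [ContinuousAt, tendsto_iff_dist_tendsto_zero]
  have hc : Tendsto (fun y : Fin p → ℝ => Real.sqrt (∑ j, (y j - x j) ^ 2)) (𝓝 x) (𝓝 0) := by
    have : Continuous (fun y : Fin p → ℝ => Real.sqrt (∑ j, (y j - x j) ^ 2)) := by fun_prop
    have h := this.tendsto x
    simpa using h
  refine squeeze_zero (fun _ => dist_nonneg) (fun y => ?_) hc
  rw [Real.dist_eq]
  apply Real.le_sqrt_of_sq_le
  rw [sq_abs]
  refine le_trans ?_ (sortedAbs_dist y x)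
  exact Finset.single_le_sum (f := fun i => (sortedAbs y i - sortedAbs x i) ^ 2)
    (fun j _ => sq_nonneg _) (Finset.mem_univ i)

/-- Lebesgue measure on the unit interval. -/
noncomputable def unitM : Measure ℝ := volume.restrict (Set.Ioo (0:ℝ) 1)

instance unitM_prob : IsProbabilityMeasure unitM := ⟨by simp [unitM]⟩

noncomputable abbrev HH := Lp ℝ 2 unitM

/-- The cells of the unit interval. -/
def cell (p : ℕ) (i : Fin p) : Set ℝ := Set.Ico ((i : ℝ) / p) (((i : ℝ) + 1) / p)

lemma cell_meas (p : ℕ) (i : Fin p) : MeasurableSet (cell p i) := measurableSet_Ico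

lemma mem_cell {p : ℕ} (i : Fin p) (u : ℝ) : u ∈ cell p i ↔ (i : ℝ) ≤ p * u ∧ p * u < i + 1 := by
  have hp : (0 : ℝ) < p := by exact_mod_cast i.pos
  simp only [cell, Set.mem_Ico]
  rw [div_le_iff₀ hp, lt_div_iff₀ hp, mul_comm]

lemma cell_unique {p : ℕ} {i j : Fin p} {u v : ℝ} (hi : u ∈ cell p i) (hj : v ∈ cell p j)
    (huv : u ≤ v) : i ≤ j := by
  rw [mem_cell] at hi hj
  have : (p : ℝ) * u ≤ p * v := by gcongr
  have h : (i : ℝ) < j + 1 := by linarith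
  have : (i : ℕ) < j + 1 := by exact_mod_cast h
  exact Fin.le_def.2 (by omega)

lemma exists_cell {p : ℕ} (hp : 0 < p) {u : ℝ} (hu : u ∈ Set.Ioo (0:ℝ) 1) :
    ∃ i, u ∈ cell p i := by
  have hp' : (0 : ℝ) < p := by exact_mod_cast hp
  have h0 : 0 ≤ (p : ℝ) * u := mul_nonneg hp'.le hu.1.le
  refine ⟨⟨⌊(p : ℝ) * u⌋₊, ?_⟩, ?_⟩
  · rw [Nat.floor_lt h0]; nlinarith [hu.2]
  · rw [mem_cell]
    exact ⟨Nat.floor_le h0, Nat.lt_floor_add_one _⟩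

lemma cell_vol (p : ℕ) (i : Fin p) : unitM.real (cell p i) = 1 / p := by
  have hp : (0 : ℝ) < p := by exact_mod_cast i.pos
  have h1 : unitM = volume.restrict (Set.Ico (0:ℝ) 1) := Measure.restrict_congr_set Ioo_ae_eq_Ico
  have h2 : cell p i ∩ Set.Ico (0:ℝ) 1 = cell p i := by
    refine Set.inter_eq_left.2 ?_
    refine Set.Ico_subset_Ico (by positivity) ?_
    rw [div_le_one hp]
    exact_mod_cast i.isLt
  rw [measureReal_def, h1, Measure.restrict_apply (cell_meas p i), h2, cell, Real.volume_Ico]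
  rw [ENNReal.toReal_ofReal]
  · field_simp; ring
  · rw [sub_nonneg]; gcongr; linarith

/-- Normalised indicator. -/
noncomputable def ee (p : ℕ) (i : Fin p) : HH :=
  indicatorConstLp 2 (cell_meas p i) (measure_ne_top _ _) (1 : ℝ)

lemma inner_ee_ee (p : ℕ) (i j : Fin p) :
    inner ℝ (ee p i) (ee p j) = if i = j then 1 / (p : ℝ) else 0 := by
  rw [ee, ee, L2.real_inner_indicatorConstLp_one_indicatorConstLp_one]
  split_ifs with h
  · subst h; rw [Set.inter_self, cell_vol]
  · have : cell p i ∩ cell p j = ∅ := by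
      ext u
      simp only [Set.mem_inter_iff, Set.mem_empty_iff_false, iff_false]
      rintro ⟨h1, h2⟩
      exact h (le_antisymm (cell_unique h1 h2 le_rfl) (cell_unique h2 h1 le_rfl))
    rw [this]; simp

/-- step function embedding. -/
noncomputable def emb {p : ℕ} (x : Fin p → ℝ) : HH := ∑ i, x i • ee p i

lemma inner_emb {p : ℕ} (x y : Fin p → ℝ) : inner ℝ (emb x) (emb y) = (∑ i, x i * y i) / p := by
  simp only [emb, sum_inner, inner_sum, inner_smul_left, inner_smul_right, inner_ee_ee]
  simp [div_eq_mul_inv]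
  rw [Finset.sum_mul]
  exact Finset.sum_congr rfl fun i _ => by ring

lemma norm_emb_sq {p : ℕ} (x : Fin p → ℝ) : ‖emb x‖ ^ 2 = (∑ i, x i ^ 2) / p := by
  rw [← real_inner_self_eq_norm_sq, inner_emb]
  simp [sq]

lemma emb_sub {p : ℕ} (x y : Fin p → ℝ) : emb x - emb y = emb (fun i => x i - y i) := by
  simp [emb, sub_smul]

lemma emb_smul {p : ℕ} (a : ℝ) (y : Fin p → ℝ) : a • emb y = emb (fun i => a * y i) := by
  simp [emb, mul_smul, Finset.smul_sum]

lemma continuous_emb {p : ℕ} : Continuous (emb : (Fin p → ℝ) → HH) := by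
  unfold emb; fun_prop

lemma emb_coeFn {p : ℕ} (x : Fin p → ℝ) :
    (emb x : ℝ → ℝ) =ᵐ[unitM] fun u => ∑ i, x i * (cell p i).indicator (fun _ => (1:ℝ)) u := by
  have h1 := Lp.coeFn_finsetSum (Finset.univ : Finset (Fin p)) (fun i => x i • ee p i)
  have h2 : ∀ i, ((x i • ee p i : HH) : ℝ → ℝ) =ᵐ[unitM]
      fun u => x i * (cell p i).indicator (fun _ => (1:ℝ)) u := by
    intro i
    filter_upwards [Lp.coeFn_smul (x i) (ee p i),
      indicatorConstLp_coeFn (p := 2) (μ := unitM) (hs := cell_meas p i)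
        (hμs := measure_ne_top _ _) (c := (1:ℝ))] with u h3 h4
    rw [h3, Pi.smul_apply, smul_eq_mul, ee, h4]
  have h3 := ae_all_iff.2 h2
  filter_upwards [h1, h3] with u h4 h5
  rw [emb, h4]
  simp [h5]

lemma step_eq {p : ℕ} (x : Fin p → ℝ) {u : ℝ} {i : Fin p} (hi : u ∈ cell p i) :
    ∑ j, x j * (cell p j).indicator (fun _ => (1:ℝ)) u = x i := by
  rw [Finset.sum_eq_single i]
  · simp [hi]
  · intro j _ hj
    rw [Set.indicator_of_notMem, mul_zero]
    intro h
    exact hj (le_antisymm (cell_unique h hi le_rfl) (cell_unique hi h le_rfl))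
  · simp

/-- the monotone nonnegative cone. -/
def KK : Set HH := {v | ∃ f : ℝ → ℝ, (v : ℝ → ℝ) =ᵐ[unitM] f ∧ MonotoneOn f (Set.Ioo 0 1) ∧
  ∀ u ∈ Set.Ioo (0:ℝ) 1, 0 ≤ f u}

lemma emb_mem_KK {p : ℕ} (hp : 0 < p) {w : Fin p → ℝ} (hw : Monotone w) (hw0 : ∀ i, 0 ≤ w i) :
    emb w ∈ KK := by
  refine ⟨_, emb_coeFn w, ?_, ?_⟩
  · intro u hu v hv huv
    obtain ⟨i, hi⟩ := exists_cell hp hu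
    obtain ⟨j, hj⟩ := exists_cell hp hv
    simp only [step_eq w hi, step_eq w hj]
    exact hw (cell_unique hi hj huv)
  · intro u hu
    obtain ⟨i, hi⟩ := exists_cell hp hu
    rw [step_eq w hi]
    exact hw0 i

lemma inner_ee (p : ℕ) (i : Fin p) (v : HH) : inner ℝ (ee p i) v = ∫ u in cell p i, v u ∂unitM :=
  L2.inner_indicatorConstLp_one _ _ _

lemma inner_ee_nonneg {v : HH} (hv : v ∈ KK) {p : ℕ} (i : Fin p) : 0 ≤ inner ℝ (ee p i) v := by
  obtain ⟨f, hf, hm, h0⟩ := hv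
  rw [inner_ee]
  apply setIntegral_nonneg_of_ae_restrict
  apply ae_restrict_of_ae
  have : ∀ᵐ u ∂unitM, u ∈ Set.Ioo (0:ℝ) 1 := ae_restrict_mem measurableSet_Ioo
  filter_upwards [hf, this] with u h1 h2
  rw [h1]; exact h0 u h2

lemma inner_ee_mono {v : HH} (hv : v ∈ KK) {p : ℕ} : Monotone fun i => inner ℝ (ee p i) v := by
  intro i j hij
  rcases eq_or_lt_of_le hij with h | hlt
  · rw [h]
  obtain ⟨f, hf, hm, h0⟩ := hv
  have hp : (0 : ℝ) < p := by exact_mod_cast i.pos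
  set c : ℝ := (j : ℝ) / p with hc
  have hij' : (i : ℝ) + 1 ≤ j := by exact_mod_cast hlt
  have hi0 : (0 : ℝ) ≤ i := by positivity
  have hjp : (j : ℝ) < p := by exact_mod_cast j.isLt
  have hcm : c ∈ Set.Ioo (0:ℝ) 1 := ⟨by apply div_pos _ hp; linarith, by rw [hc, div_lt_one hp]; exact hjp⟩
  have hpc : (p : ℝ) * c = j := by rw [hc]; field_simp
  have hmem : ∀ᵐ u ∂unitM, u ∈ Set.Ioo (0:ℝ) 1 := ae_restrict_mem measurableSet_Ioo
  have hint : Integrable v unitM := (Lp.memLp v).integrable (by norm_num)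
  simp only [inner_ee]
  calc ∫ u in cell p i, v u ∂unitM ≤ ∫ u in cell p i, f c ∂unitM := by
        refine setIntegral_mono_on_ae hint.integrableOn (integrable_const _).integrableOn
          (cell_meas p i) ?_
        filter_upwards [hf, hmem] with u h1 h2 h3
        rw [h1]
        refine hm h2 hcm ?_
        rw [mem_cell] at h3
        by_contra hlt
        push Not at hlt
        have : (p : ℝ) * c < p * u := by gcongr
        linarith
    _ = ∫ u in cell p j, f c ∂unitM := by
        rw [setIntegral_const, setIntegral_const, cell_vol, cell_vol]
    _ ≤ ∫ u in cell p j, v u ∂unitM := by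
        refine setIntegral_mono_on_ae (integrable_const _).integrableOn hint.integrableOn
          (cell_meas p j) ?_
        filter_upwards [hf, hmem] with u h1 h2 h3
        rw [h1]
        refine hm hcm h2 ?_
        rw [mem_cell] at h3
        by_contra hlt
        push Not at hlt
        have : (p : ℝ) * u < p * c := by gcongr
        linarith

/-- averaging projection -/
lemma exists_avg {p : ℕ} (hp : 0 < p) {v : HH} (hv : v ∈ KK) :
    ∃ w : Fin p → ℝ, Monotone w ∧ (∀ i, 0 ≤ w i) ∧ ∀ y : Fin p → ℝ,
      ‖emb y - emb w‖ ^ 2 ≤ ‖emb y - v‖ ^ 2 := by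
  have hp' : (0 : ℝ) < p := by exact_mod_cast hp
  refine ⟨fun i => p * inner ℝ (ee p i) v, ?_, ?_, ?_⟩
  · intro i j hij
    exact mul_le_mul_of_nonneg_left (inner_ee_mono hv hij) hp'.le
  · intro i
    exact mul_nonneg hp'.le (inner_ee_nonneg hv i)
  · intro y
    set w : Fin p → ℝ := fun i => p * inner ℝ (ee p i) v with hw
    have horth : ∀ z : Fin p → ℝ, inner ℝ (emb z) (emb w - v) = 0 := by
      intro z
      rw [inner_sub_right, inner_emb, emb, sum_inner, Finset.sum_div, ← Finset.sum_sub_distrib]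
      refine Finset.sum_eq_zero fun i _ => ?_
      rw [inner_smul_left, hw]
      simp
      field_simp
      ring
    have h : emb y - v = (emb y - emb w) + (emb w - v) := by abel
    rw [h, norm_add_sq_real, emb_sub, horth]
    nlinarith [sq_nonneg ‖emb w - v‖]

/-- The limit functional. -/
noncomputable def EE (τ : ℝ) (q l : HH) : ℝ :=
  (1 / (2 * τ)) * (Metric.infDist (q - τ • l) KK) ^ 2 + inner ℝ l q - τ / 2 * ‖l‖ ^ 2

lemma KK_nonempty : KK.Nonempty := by
  refine ⟨0, 0, Lp.coeFn_zero _ _ _, fun _ _ _ _ _ => le_rfl, fun _ _ => le_rfl⟩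

lemma obj_eq {τ : ℝ} (hτ : 0 < τ) (q l v : HH) :
    (1 / (2 * τ)) * ‖q - v‖ ^ 2 + inner ℝ l v
      = (1 / (2 * τ)) * ‖(q - τ • l) - v‖ ^ 2 + inner ℝ l q - τ / 2 * ‖l‖ ^ 2 := by
  have h : (q - τ • l) - v = (q - v) - τ • l := by abel
  rw [h, norm_sub_sq_real (q - v), inner_smul_right, norm_smul, inner_sub_left,
    real_inner_comm l q, real_inner_comm l v, Real.norm_eq_abs, mul_pow, sq_abs]
  field_simp
  ring

lemma emb_obj {p : ℕ} (τ : ℝ) (x lam v : Fin p → ℝ) :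
    ((1 / (2 * τ)) * ∑ i, (x i - v i) ^ 2 + ∑ i, lam i * v i) / p
      = (1 / (2 * τ)) * ‖emb x - emb v‖ ^ 2 + inner ℝ (emb lam) (emb v) := by
  rw [emb_sub, norm_emb_sq, inner_emb]
  ring

lemma sortedL1_div {p : ℕ} (lam x : Fin p → ℝ) :
    sortedL1 lam x / p = inner ℝ (emb lam) (emb (sortedAbs x)) := by
  rw [inner_emb, sortedL1]

lemma moreau_div {p : ℕ} (hp : 0 < p) {τ : ℝ} (hτ : 0 < τ) (lam x : Fin p → ℝ)
    (h0 : ∀ i, 0 ≤ lam i) :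
    moreauJ lam x τ / p = EE τ (emb (sortedAbs x)) (emb lam) := by
  have hp' : (0 : ℝ) < p := by exact_mod_cast hp
  have hsL0 : ∀ v, 0 ≤ sortedL1 lam v := fun v =>
    Finset.sum_nonneg fun i _ => mul_nonneg (h0 i) (sortedAbs_nonneg v i)
  have hbdd : BddBelow (Set.range fun v : Fin p → ℝ =>
      ((1 / (2 * τ)) * ∑ i, (x i - v i) ^ 2 + sortedL1 lam v)) := by
    refine ⟨0, ?_⟩
    rintro _ ⟨v, rfl⟩
    have := hsL0 v
    positivity
  apply le_antisymm
  · have key : ∀ k ∈ KK, moreauJ lam x τ / p ≤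
        (1 / (2 * τ)) * ‖(emb (sortedAbs x) - τ • emb lam) - k‖ ^ 2
          + inner ℝ (emb lam) (emb (sortedAbs x)) - τ / 2 * ‖emb lam‖ ^ 2 := by
      intro k hk
      obtain ⟨v, hvm, hv0, hv⟩ := exists_avg hp hk
      have h1 : ‖(emb (sortedAbs x) - τ • emb lam) - emb v‖ ^ 2 ≤
          ‖(emb (sortedAbs x) - τ • emb lam) - k‖ ^ 2 := by
        rw [emb_smul, emb_sub]
        exact hv _
      set σ := Tuple.sort (fun j => |x j|) with hσ
      set w : Fin p → ℝ := fun i => (if 0 ≤ x i then 1 else -1) * v (σ.symm i) with hw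
      have hwabs : ∀ i, |w i| = v (σ.symm i) := by
        intro i
        simp only [hw]
        split_ifs <;> simp [abs_of_nonneg (hv0 _)]
      have hsw : sortedAbs w = v := sortedAbs_of_perm w v σ.symm hvm hwabs
      have hdist : ∑ i, (x i - w i) ^ 2 = ∑ i, (sortedAbs x i - v i) ^ 2 := by
        rw [← Equiv.sum_comp σ (fun i => (x i - w i) ^ 2)]
        refine Finset.sum_congr rfl fun i _ => ?_
        simp only [hw, sortedAbs, ← hσ, Equiv.symm_apply_apply]
        split_ifs with h
        · rw [abs_of_nonneg h]; ring
        · rw [abs_of_neg (not_le.1 h)]; ring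
      have h2 : moreauJ lam x τ ≤
          ((1 / (2 * τ)) * ∑ i, (sortedAbs x i - v i) ^ 2 + ∑ i, lam i * v i) := by
        have := ciInf_le hbdd w
        rw [hdist, sortedL1, hsw] at this
        exact this
      have h3 : moreauJ lam x τ / p ≤
          ((1 / (2 * τ)) * ∑ i, (sortedAbs x i - v i) ^ 2 + ∑ i, lam i * v i) / p := by gcongr
      rw [emb_obj, obj_eq hτ] at h3
      refine h3.trans ?_
      gcongr
    set a := emb (sortedAbs x) - τ • emb lam with ha
    set C := inner ℝ (emb lam) (emb (sortedAbs x)) - τ / 2 * ‖emb lam‖ ^ 2 with hC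
    have h5 : Real.sqrt (2 * τ * (moreauJ lam x τ / p - C)) ≤ Metric.infDist a KK := by
      rw [Metric.le_infDist KK_nonempty]
      intro k hk
      rw [dist_eq_norm]
      apply Real.sqrt_le_iff.2 ⟨norm_nonneg _, ?_⟩
      have := key k hk
      have h6 : moreauJ lam x τ / p - C ≤ (1 / (2 * τ)) * ‖a - k‖ ^ 2 := by linarith
      calc 2 * τ * (moreauJ lam x τ / p - C) ≤ 2 * τ * ((1 / (2 * τ)) * ‖a - k‖ ^ 2) := by gcongr
        _ = _ := by field_simp
    have h7 := Real.sqrt_le_iff.1 h5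
    rw [EE, ← ha]
    have h8 : moreauJ lam x τ / p - C ≤ (1 / (2 * τ)) * (Metric.infDist a KK) ^ 2 := by
      calc moreauJ lam x τ / p - C = (1 / (2 * τ)) * (2 * τ * (moreauJ lam x τ / p - C)) := by
            field_simp
        _ ≤ _ := by gcongr; exact h7.2
    linarith
  · rw [le_div_iff₀ hp']
    apply le_ciInf
    intro v
    rw [← le_div_iff₀ hp']
    have h1 : ((1 / (2 * τ)) * ∑ i, (sortedAbs x i - sortedAbs v i) ^ 2
        + ∑ i, lam i * sortedAbs v i) / p ≤
        ((1 / (2 * τ)) * ∑ i, (x i - v i) ^ 2 + sortedL1 lam v) / p := by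
      rw [sortedL1]
      have h9 := sortedAbs_dist x v
      gcongr ((1 / (2 * τ)) * ?_ + _) / _
    refine le_trans ?_ h1
    rw [emb_obj, obj_eq hτ, EE]
    gcongr
    · exact Metric.infDist_nonneg
    · rw [← dist_eq_norm]
      exact Metric.infDist_le_dist_of_mem
        (emb_mem_KK hp (sortedAbs_mono v) (sortedAbs_nonneg v))

/-- quantile function -/
noncomputable def qf (ρ : Measure ℝ) (u : ℝ) : ℝ := sInf {t | u ≤ cdf ρ t}

lemma qf_le_iff (ρ : Measure ℝ) {u : ℝ} (hu : u ∈ Set.Ioo (0:ℝ) 1) (t : ℝ) :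
    qf ρ u ≤ t ↔ u ≤ cdf ρ t := by
  have hne : {t | u ≤ cdf ρ t}.Nonempty := by
    have := (tendsto_cdf_atTop ρ).eventually (lt_mem_nhds hu.2)
    obtain ⟨t, ht⟩ := this.exists
    exact ⟨t, le_of_lt ht⟩
  have hbd : BddBelow {t | u ≤ cdf ρ t} := by
    have := (tendsto_cdf_atBot ρ).eventually (gt_mem_nhds hu.1)
    obtain ⟨t, ht⟩ := this.exists
    refine ⟨t, fun s hs => ?_⟩
    by_contra hlt
    push Not at hlt
    have h1 := monotone_cdf ρ hlt.le
    have h2 : u ≤ cdf ρ s := hs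
    linarith
  constructor
  · intro h
    have h1 : u ≤ cdf ρ (qf ρ u) := by
      have hr := ((cdf ρ).right_continuous (qf ρ u)).mono Set.Ioi_subset_Ici_self
      refine ge_of_tendsto hr ?_
      filter_upwards [self_mem_nhdsWithin] with s hs
      obtain ⟨r, hr, hrs⟩ := exists_lt_of_csInf_lt hne hs
      exact le_trans hr (monotone_cdf ρ hrs.le)
    exact h1.trans (monotone_cdf ρ h)
  · intro h
    exact csInf_le hbd h

lemma unitM_mem : ∀ᵐ u ∂unitM, u ∈ Set.Ioo (0:ℝ) 1 := ae_restrict_mem measurableSet_Ioo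

lemma qf_aemeas (ρ : Measure ℝ) : AEMeasurable (qf ρ) unitM := by
  refine aemeasurable_restrict_of_monotoneOn measurableSet_Ioo ?_
  intro u hu v hv huv
  rw [qf_le_iff ρ hu]
  exact huv.trans ((qf_le_iff ρ hv _).1 le_rfl)

lemma qf_law (ρ : Measure ℝ) [IsProbabilityMeasure ρ] : unitM.map (qf ρ) = ρ := by
  have : IsProbabilityMeasure (unitM.map (qf ρ)) := Measure.isProbabilityMeasure_map (qf_aemeas ρ)
  refine Measure.ext_of_Iic _ _ fun t => ?_
  rw [Measure.map_apply_of_aemeasurable (qf_aemeas ρ) measurableSet_Iic, ← ofReal_cdf ρ t]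
  have h1 : unitM (qf ρ ⁻¹' Set.Iic t) = unitM (Set.Iic (cdf ρ t)) := by
    apply measure_congr
    filter_upwards [unitM_mem] with u hu
    exact propext (qf_le_iff ρ hu t)
  have h2 : unitM = volume.restrict (Set.Ioc (0:ℝ) 1) := Measure.restrict_congr_set Ioo_ae_eq_Ioc
  rw [h1, h2, Measure.restrict_apply measurableSet_Iic]
  have h3 : Set.Iic (cdf ρ t) ∩ Set.Ioc (0:ℝ) 1 = Set.Ioc 0 (cdf ρ t) := by
    ext u
    have := cdf_le_one ρ t
    simp only [Set.mem_inter_iff, Set.mem_Iic, Set.mem_Ioc]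
    constructor
    · rintro ⟨a, b, c⟩; exact ⟨b, a⟩
    · rintro ⟨a, b⟩; exact ⟨b, a, b.trans this⟩
  rw [h3, Real.volume_Ioc, sub_zero]

/-- `q` is a version of the quantile function of the absolute value of `ν`. -/
def IsQ (ν : Measure ℝ) (q : HH) : Prop :=
  (∀ᵐ u ∂unitM, 0 ≤ q u) ∧ ‖q‖ ^ 2 = ∫ t, t ^ 2 ∂ν ∧
  ∀ᵐ u ∂unitM, ∀ t', 0 ≤ t' → t' < q u → ∃ f : BoundedContinuousFunction ℝ ℝ,
    (∀ x, 0 ≤ f x) ∧ (∀ x, |x| ≤ t' → 1 ≤ f x) ∧ ∫ x, f x ∂ν < u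

lemma norm_sq_HH (q : HH) : ‖q‖ ^ 2 = ∫ u, (q u) ^ 2 ∂unitM := by
  rw [← real_inner_self_eq_norm_sq, L2.inner_def]
  simp [sq]

lemma exists_IsQ (ν : Measure ℝ) [IsProbabilityMeasure ν] (h2 : Integrable (fun t => t ^ 2) ν) :
    ∃ q, IsQ ν q := by
  have hab : AEMeasurable (fun t : ℝ => |t|) ν := by fun_prop
  set ρ := ν.map (fun t : ℝ => |t|) with hρ
  have : IsProbabilityMeasure ρ := Measure.isProbabilityMeasure_map hab
  have hcdf : ∀ t, cdf ρ t = ν.real {x | |x| ≤ t} := by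
    intro t
    rw [cdf_eq_real, measureReal_def, hρ, Measure.map_apply_of_aemeasurable hab measurableSet_Iic]
    rfl
  have hsqm : AEStronglyMeasurable (fun t : ℝ => t ^ 2) ρ := by fun_prop
  have hint : Integrable (fun t => t ^ 2) ρ := by
    rw [hρ, integrable_map_measure (by fun_prop) hab]
    refine h2.congr ?_
    filter_upwards with t
    simp
  have hval : ∫ t, t ^ 2 ∂ρ = ∫ t, t ^ 2 ∂ν := by
    rw [hρ, integral_map hab (by fun_prop)]
    simp
  have hmem : MemLp (qf ρ) 2 unitM := by
    rw [memLp_two_iff_integrable_sq (qf_aemeas ρ).aestronglyMeasurable]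
    have := hint
    rw [← qf_law ρ, integrable_map_measure (by fun_prop) (qf_aemeas ρ)] at this
    exact this
  refine ⟨hmem.toLp, ?_, ?_, ?_⟩
  · filter_upwards [hmem.coeFn_toLp, unitM_mem] with u h hu
    rw [h]
    by_contra hlt
    push Not at hlt
    have h3 := (qf_le_iff ρ hu _).1 le_rfl
    rw [hcdf] at h3
    have : {x : ℝ | |x| ≤ qf ρ u} = ∅ := by
      ext x
      simp only [Set.mem_ofPred_eq, Set.mem_empty_iff_false, iff_false, not_le]
      exact hlt.trans_le (abs_nonneg x)
    rw [this] at h3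
    simp at h3
    linarith [hu.1]
  · rw [norm_sq_HH, ← hval]
    conv_rhs => rw [← qf_law ρ]
    rw [integral_map (qf_aemeas ρ) (by fun_prop)]
    refine integral_congr_ae ?_
    filter_upwards [hmem.coeFn_toLp] with u h
    rw [h]
  · filter_upwards [hmem.coeFn_toLp, unitM_mem] with u h hu t' ht0 ht
    rw [h] at ht
    obtain ⟨t, ht1, ht2⟩ := exists_between ht
    have h3 : cdf ρ t < u := by
      by_contra hc
      push Not at hc
      have := (qf_le_iff ρ hu t).2 hc
      linarith
    have hd : 0 < t - t' := by linarith
    have hcont : Continuous fun x : ℝ => max 0 (min 1 ((t - |x|) / (t - t'))) := by fun_prop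
    have h0 : ∀ x : ℝ, 0 ≤ max 0 (min 1 ((t - |x|) / (t - t'))) := fun x => le_max_left _ _
    have h1 : ∀ x : ℝ, max 0 (min 1 ((t - |x|) / (t - t'))) ≤ 1 :=
      fun x => max_le zero_le_one (min_le_left _ _)
    let f : BoundedContinuousFunction ℝ ℝ := BoundedContinuousFunction.ofNormedAddCommGroup
      (fun x : ℝ => max 0 (min 1 ((t - |x|) / (t - t')))) hcont 1 (by
        intro x
        rw [Real.norm_eq_abs, abs_of_nonneg (h0 x)]
        exact h1 x)
    have hf : ∀ x, f x = max 0 (min 1 ((t - |x|) / (t - t'))) := fun x => rfl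
    refine ⟨f, fun x => h0 x, fun x hx => ?_, ?_⟩
    · rw [hf]
      apply le_max_of_le_right
      apply le_min le_rfl
      rw [le_div_iff₀ hd]
      linarith
    · refine lt_of_le_of_lt ?_ h3
      rw [hcdf]
      have hms : MeasurableSet {x : ℝ | |x| ≤ t} := measurableSet_le (by fun_prop) (by fun_prop)
      rw [← integral_indicator_one hms]
      refine integral_mono (f.integrable ν) ?_ ?_
      · exact (integrable_const (1:ℝ)).indicator hms
      · intro x
        simp only [hf]
        by_cases hx : |x| ≤ t
        · rw [Set.indicator_of_mem (by exact hx)]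
          exact h1 x
        · rw [Set.indicator_of_notMem (by exact hx)]
          push Not at hx
          apply max_le le_rfl
          apply min_le_of_right_le
          apply div_nonpos_of_nonpos_of_nonneg <;> linarith

instance gaussPi_prob (p : ℕ) : IsProbabilityMeasure (gaussPi p) := by
  unfold gaussPi; infer_instance

lemma sorted_lower {p : ℕ} (x : Fin p → ℝ) {u t' : ℝ} {j : Fin p} (hu : u ∈ cell p j)
    (ht : 0 ≤ t') (f : ℝ → ℝ) (hf0 : ∀ x, 0 ≤ f x) (hf1 : ∀ x, |x| ≤ t' → 1 ≤ f x) {a : ℝ}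
    (ha : a < u) :
    t' * (1 - |(∑ i, f (x i)) / p - a| / (u - a)) ≤ sortedAbs x j := by
  have hp : (0 : ℝ) < p := by exact_mod_cast j.pos
  have hd : 0 < u - a := by linarith
  rcases lt_or_ge t' (sortedAbs x j) with h | h
  · refine le_trans ?_ h.le
    have : 0 ≤ |(∑ i, f (x i)) / p - a| / (u - a) := by positivity
    nlinarith
  · have h1 : (j : ℝ) + 1 ≤ ∑ i, f (x i) := by
      rw [← Equiv.sum_comp (Tuple.sort (fun j => |x j|)) (fun i => f (x i))]
      calc (j : ℝ) + 1 = ∑ i ∈ Finset.Iic j, (1:ℝ) := by simp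
        _ ≤ ∑ i ∈ Finset.Iic j, f (x (Tuple.sort (fun j => |x j|) i)) := by
          refine Finset.sum_le_sum fun i hi => ?_
          apply hf1
          exact le_trans (sortedAbs_mono x (Finset.mem_Iic.1 hi)) h
        _ ≤ _ := Finset.sum_le_sum_of_subset_of_nonneg (Finset.subset_univ _) fun i _ _ => hf0 _
    have h2 : u ≤ (∑ i, f (x i)) / p := by
      rw [le_div_iff₀ hp, mul_comm]
      exact ((mem_cell j u).1 hu).2.le.trans h1
    have h3 : 1 ≤ |(∑ i, f (x i)) / p - a| / (u - a) := by
      rw [le_div_iff₀ hd, one_mul]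
      exact le_trans (by linarith) (le_abs_self _)
    refine le_trans ?_ (sortedAbs_nonneg x j)
    nlinarith

lemma sortedAbs_integrable {p : ℕ} {X : (Fin p → ℝ) → Fin p → ℝ} (hX : Continuous X)
    (hint : ∀ i, Integrable (fun h => (X h i) ^ 2) (gaussPi p)) (j : Fin p) :
    Integrable (fun h => sortedAbs (X h) j) (gaussPi p) := by
  have hc : Continuous fun h => sortedAbs (X h) j :=
    (continuous_apply j).comp (continuous_sortedAbs.comp hX)
  refine Integrable.mono' (g := fun h => 1 + ∑ i, (X h i) ^ 2)
    ((integrable_const _).add (integrable_finsetSum _ fun i _ => hint i))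
    hc.aestronglyMeasurable ?_
  filter_upwards with h
  rw [Real.norm_eq_abs, abs_of_nonneg (sortedAbs_nonneg _ _)]
  have := Finset.single_le_sum (f := fun i => (sortedAbs (X h) i) ^ 2)
    (fun j _ => sq_nonneg _) (Finset.mem_univ j)
  rw [sum_sortedAbs_sq] at this
  nlinarith [sq_nonneg (sortedAbs (X h) j - 1)]

lemma inner_emb_left {p : ℕ} (x : Fin p → ℝ) (q : HH) :
    inner ℝ (emb x) q = ∑ i, x i * inner ℝ (ee p i) q := by
  simp [emb, sum_inner, inner_smul_left]

lemma W_inner {p : ℕ} {X : (Fin p → ℝ) → Fin p → ℝ} (hX : Continuous X)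
    (hint : ∀ i, Integrable (fun h => (X h i) ^ 2) (gaussPi p)) (q : HH) :
    Integrable (fun h => inner ℝ (emb (sortedAbs (X h))) q) (gaussPi p) ∧
    ∫ h, inner ℝ (emb (sortedAbs (X h))) q ∂gaussPi p
      = inner ℝ (emb fun i => ∫ h, sortedAbs (X h) i ∂gaussPi p) q := by
  simp only [inner_emb_left]
  have h := fun i => (sortedAbs_integrable hX hint i).mul_const (inner ℝ (ee p i) q)
  refine ⟨integrable_finsetSum _ fun i _ => h i, ?_⟩
  rw [integral_finsetSum _ fun i _ => h i]
  simp [integral_mul_const]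

lemma W_expand {p : ℕ} {X : (Fin p → ℝ) → Fin p → ℝ} (hX : Continuous X)
    (hint : ∀ i, Integrable (fun h => (X h i) ^ 2) (gaussPi p)) (q : HH) :
    Integrable (fun h => ‖emb (sortedAbs (X h)) - q‖ ^ 2) (gaussPi p) ∧
    ∫ h, ‖emb (sortedAbs (X h)) - q‖ ^ 2 ∂gaussPi p
      = ∫ h, (∑ i, (X h i) ^ 2) / p ∂gaussPi p
        - 2 * inner ℝ (emb fun i => ∫ h, sortedAbs (X h) i ∂gaussPi p) q + ‖q‖ ^ 2 := by
  simp only [norm_sub_sq_real, norm_emb_sq, sum_sortedAbs_sq]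
  obtain ⟨h1, h2⟩ := W_inner hX hint q
  have h3 : Integrable (fun h => (∑ i, (X h i) ^ 2) / (p : ℝ)) (gaussPi p) :=
    (integrable_finsetSum _ fun i _ => hint i).div_const _
  have h4 : Integrable (fun h => (∑ i, (X h i) ^ 2) / (p : ℝ)
      - 2 * inner ℝ (emb (sortedAbs (X h))) q) (gaussPi p) := h3.sub (h1.const_mul 2)
  refine ⟨h4.add (integrable_const _), ?_⟩
  rw [integral_add h4 (integrable_const _)]
  rw [integral_sub h3 (h1.const_mul 2), integral_const_mul, h2]
  simp

lemma W_pointwise {X : (p : ℕ) → (Fin p → ℝ) → Fin p → ℝ} (hX : ∀ p, Continuous (X p))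
    (hint : ∀ p i, Integrable (fun h => (X p h i) ^ 2) (gaussPi p)) {ν : Measure ℝ}
    (hconv : ∀ f : BoundedContinuousFunction ℝ ℝ,
      Tendsto (fun p => ∫ h, |(∑ i, f (X p h i)) / (p:ℝ) - ∫ x, f x ∂ν| ∂gaussPi p) atTop (𝓝 0))
    {q : HH} (hq : IsQ ν q) :
    ∀ᵐ u ∂unitM, ENNReal.ofReal ((q u) ^ 2) ≤
      liminf (fun p => ENNReal.ofReal
        (q u * (emb fun i => ∫ h, sortedAbs (X p h) i ∂gaussPi p) u)) atTop := by
  have hcoe := ae_all_iff.2 fun p => emb_coeFn fun i => ∫ h, sortedAbs (X p h) i ∂gaussPi p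
  filter_upwards [hcoe, hq.1, hq.2.2, unitM_mem] with u hm hq0 hq2 hu
  have main : ∀ t', 0 ≤ t' → t' < q u → ENNReal.ofReal (q u * t') ≤
      liminf (fun p => ENNReal.ofReal
        (q u * (emb fun i => ∫ h, sortedAbs (X p h) i ∂gaussPi p) u)) atTop := by
    intro t' ht0 ht
    obtain ⟨f, hf0, hf1, hfu⟩ := hq2 t' ht0 ht
    set a := ∫ x, f x ∂ν with ha
    have hlim : Tendsto (fun p => ENNReal.ofReal (q u * (t' *
        (1 - (∫ h, |(∑ i, f (X p h i)) / (p:ℝ) - a| ∂gaussPi p) / (u - a))))) atTop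
        (𝓝 (ENNReal.ofReal (q u * t'))) := by
      apply ENNReal.tendsto_ofReal
      have h1 := (((((hconv f).div_const (u - a)).const_sub 1).const_mul t').const_mul (q u))
      simpa using h1
    rw [← hlim.liminf_eq]
    refine liminf_le_liminf ?_
    filter_upwards [eventually_gt_atTop 0] with p hp
    apply ENNReal.ofReal_le_ofReal
    apply mul_le_mul_of_nonneg_left _ hq0
    rw [hm p]
    obtain ⟨j, hj⟩ := exists_cell hp hu
    rw [step_eq _ hj]
    have hfi : ∀ i, Integrable (fun h => f (X p h i)) (gaussPi p) := by
      intro i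
      have hc : Continuous fun h => f (X p h i) :=
        f.continuous.comp ((continuous_apply i).comp (hX p))
      exact Integrable.of_bound hc.aestronglyMeasurable ‖f‖
        (Filter.Eventually.of_forall fun h => f.norm_coe_le_norm _)
    have hI : Integrable (fun h => |(∑ i, f (X p h i)) / (p:ℝ) - a|) (gaussPi p) :=
      (((integrable_finsetSum _ fun i _ => hfi i).div_const _).sub (integrable_const _)).abs
    have hI2 : Integrable (fun h => 1 - |(∑ i, f (X p h i)) / (p:ℝ) - a| / (u - a)) (gaussPi p) :=
      (integrable_const _).sub (hI.div_const _)
    have h5 : t' * (1 - (∫ h, |(∑ i, f (X p h i)) / (p:ℝ) - a| ∂gaussPi p) / (u - a))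
        = ∫ h, t' * (1 - |(∑ i, f (X p h i)) / (p:ℝ) - a| / (u - a)) ∂gaussPi p := by
      rw [integral_const_mul, integral_sub (integrable_const _) (hI.div_const _), integral_div]
      simp
    rw [h5]
    exact integral_mono (hI2.const_mul _) (sortedAbs_integrable (hX p) (hint p) j)
      fun h => sorted_lower (X p h) hj ht0 f hf0 hf1 hfu
  rcases hq0.eq_or_lt with h0 | h0
  · rw [← h0]; simp
  have hl : Tendsto (fun t' => ENNReal.ofReal (q u * t')) (𝓝[<] (q u))
      (𝓝 (ENNReal.ofReal ((q u) ^ 2))) := by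
    apply ENNReal.tendsto_ofReal
    rw [sq]
    have : Continuous fun t' => q u * t' := by fun_prop
    exact (this.tendsto (q u)).mono_left nhdsWithin_le_nhds
  refine le_of_tendsto hl ?_
  filter_upwards [Ioo_mem_nhdsLT h0] with t' ht
  exact main t' ht.1.le ht.2

lemma W_main {X : (p : ℕ) → (Fin p → ℝ) → Fin p → ℝ} (hX : ∀ p, Continuous (X p))
    (hint : ∀ p i, Integrable (fun h => (X p h i) ^ 2) (gaussPi p)) {ν : Measure ℝ}
    (hconv : ∀ f : BoundedContinuousFunction ℝ ℝ,
      Tendsto (fun p => ∫ h, |(∑ i, f (X p h i)) / (p:ℝ) - ∫ x, f x ∂ν| ∂gaussPi p) atTop (𝓝 0))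
    (h2 : Tendsto (fun p => ∫ h, (∑ i, (X p h i) ^ 2) / (p:ℝ) ∂gaussPi p) atTop
      (𝓝 (∫ t, t ^ 2 ∂ν)))
    {q : HH} (hq : IsQ ν q) :
    Tendsto (fun p => ∫ h, ‖emb (sortedAbs (X p h)) - q‖ ^ 2 ∂gaussPi p) atTop (𝓝 0) := by
  set m : (p : ℕ) → HH := fun p => emb fun i => ∫ h, sortedAbs (X p h) i ∂gaussPi p with hm
  have hinner : ∀ p, inner ℝ (m p) q = ∫ u, q u * m p u ∂unitM := by
    intro p
    rw [L2.inner_def]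
    simp
  have hii : ∀ p, Integrable (fun u => q u * m p u) unitM := by
    intro p
    have := L2.integrable_inner (𝕜 := ℝ) (m p) q
    simpa using this
  have hm0 : ∀ p, 0 < p → ∀ᵐ u ∂unitM, 0 ≤ q u * m p u := by
    intro p hp
    filter_upwards [emb_coeFn fun i => ∫ h, sortedAbs (X p h) i ∂gaussPi p, hq.1, unitM_mem]
      with u h1 h3 hu
    obtain ⟨j, hj⟩ := exists_cell hp hu
    rw [hm]
    simp only
    rw [h1, step_eq _ hj]
    exact mul_nonneg h3 (integral_nonneg fun h => sortedAbs_nonneg _ _)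
  have hfatou : ENNReal.ofReal (‖q‖ ^ 2) ≤
      liminf (fun p => ENNReal.ofReal (inner ℝ (m p) q)) atTop := by
    rw [norm_sq_HH, ofReal_integral_eq_lintegral_ofReal
      ((memLp_two_iff_integrable_sq (Lp.aestronglyMeasurable q)).1 (Lp.memLp q))
      (Filter.Eventually.of_forall fun u => sq_nonneg _)]
    refine le_trans (lintegral_mono_ae (W_pointwise hX hint hconv hq)) ?_
    refine le_trans (lintegral_liminf_le' fun p => (hii p).aemeasurable.ennreal_ofReal) ?_
    refine liminf_le_liminf ?_
    filter_upwards [eventually_gt_atTop 0] with p hp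
    rw [hinner, ofReal_integral_eq_lintegral_ofReal (hii p) (hm0 p hp)]
  have hlow : ∀ ε > 0, ∀ᶠ p in atTop, ‖q‖ ^ 2 - ε < inner ℝ (m p) q := by
    intro ε hε
    rcases (sq_nonneg ‖q‖).eq_or_lt with h0 | h0
    · have : q = 0 := by
        have : ‖q‖ = 0 := by nlinarith [norm_nonneg q]
        exact norm_eq_zero.1 this
      rw [this]
      simp [hε]
    · have h3 : ENNReal.ofReal (‖q‖ ^ 2 - ε) < ENNReal.ofReal (‖q‖ ^ 2) :=
        (ENNReal.ofReal_lt_ofReal_iff h0).2 (by linarith)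
      have h4 := eventually_lt_of_lt_liminf (lt_of_lt_of_le h3 hfatou)
      filter_upwards [h4] with p hp
      exact (ENNReal.ofReal_lt_ofReal_iff'.1 hp).1
  rw [← hq.2.1] at h2
  refine tendsto_order.2 ⟨fun a ha => Filter.Eventually.of_forall fun p =>
    lt_of_lt_of_le ha (integral_nonneg fun h => sq_nonneg _), fun a ha => ?_⟩
  have h5 := h2.eventually (gt_mem_nhds (show ‖q‖ ^ 2 < ‖q‖ ^ 2 + a / 4 by linarith))
  filter_upwards [h5, hlow (a / 4) (by linarith)] with p h6 h7
  rw [(W_expand (hX p) (hint p) q).2]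
  linarith

lemma int_abs_le_sqrt {Ω : Type*} [MeasurableSpace Ω] {P : Measure Ω} [IsProbabilityMeasure P]
    {Y : Ω → ℝ} (hm : AEStronglyMeasurable Y P) (hY : Integrable (fun ω => Y ω ^ 2) P) :
    Integrable (fun ω => |Y ω|) P ∧ ∫ ω, |Y ω| ∂P ≤ Real.sqrt (∫ ω, Y ω ^ 2 ∂P) := by
  have h1 : MemLp Y 2 P := (memLp_two_iff_integrable_sq hm).2 hY
  have h2 : MemLp (fun ω => |Y ω|) 2 P := h1.abs
  refine ⟨h2.integrable (by norm_num), ?_⟩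
  apply Real.le_sqrt_of_sq_le
  have h3 := variance_nonneg (fun ω => |Y ω|) P
  rw [variance_eq_sub h2] at h3
  simp only [Pi.pow_apply, sq_abs] at h3
  linarith

lemma EE_bound {τ : ℝ} (hτ : 0 < τ) (q l q' l' : HH) :
    |EE τ q' l' - EE τ q l| ≤
      (1 / (2 * τ)) * ((‖q' - q‖ + τ * ‖l' - l‖) *
          (2 * Metric.infDist (q - τ • l) KK + (‖q' - q‖ + τ * ‖l' - l‖)))
        + ((‖l‖ + ‖l' - l‖) * ‖q' - q‖ + ‖l' - l‖ * ‖q‖)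
        + τ / 2 * (‖l' - l‖ * (2 * ‖l‖ + ‖l' - l‖)) := by
  set D := ‖q' - q‖ with hD
  set δ := ‖l' - l‖ with hδ
  set R := Metric.infDist (q - τ • l) KK with hR
  set R' := Metric.infDist (q' - τ • l') KK with hR'
  have hD0 : 0 ≤ D := norm_nonneg _
  have hδ0 : 0 ≤ δ := norm_nonneg _
  have hR0 : 0 ≤ R := Metric.infDist_nonneg
  have hR0' : 0 ≤ R' := Metric.infDist_nonneg
  set η := D + τ * δ with hη
  have hη0 : 0 ≤ η := by positivity
  have hdist : dist (q' - τ • l') (q - τ • l) ≤ η := by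
    rw [dist_eq_norm]
    have : q' - τ • l' - (q - τ • l) = (q' - q) - τ • (l' - l) := by
      rw [smul_sub]; abel
    rw [this]
    refine (norm_sub_le _ _).trans ?_
    rw [norm_smul, Real.norm_eq_abs, abs_of_pos hτ]
  have h1 : R' ≤ R + η := by
    have := Metric.infDist_le_infDist_add_dist (s := KK) (x := q' - τ • l') (y := q - τ • l)
    linarith
  have h2 : R ≤ R' + η := by
    have := Metric.infDist_le_infDist_add_dist (s := KK) (x := q - τ • l) (y := q' - τ • l')
    rw [dist_comm] at this
    linarith
  have hA : |R' ^ 2 - R ^ 2| ≤ η * (2 * R + η) := by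
    have : R' ^ 2 - R ^ 2 = (R' - R) * (R' + R) := by ring
    rw [this, abs_mul]
    have h3 : |R' - R| ≤ η := by rw [abs_le]; constructor <;> linarith
    have h4 : |R' + R| ≤ 2 * R + η := by rw [abs_of_nonneg (by linarith)]; linarith
    gcongr
  have hl' : ‖l'‖ ≤ ‖l‖ + δ := by
    have := norm_add_le l (l' - l)
    simpa [hδ] using this
  have hl'' : ‖l‖ ≤ ‖l'‖ + δ := by
    have := norm_sub_le l' (l' - l)
    simpa [hδ] using this
  have hB : |inner ℝ l' q' - inner ℝ l q| ≤ (‖l‖ + δ) * D + δ * ‖q‖ := by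
    have : inner ℝ l' q' - inner ℝ l q = inner ℝ l' (q' - q) + inner ℝ (l' - l) q := by
      rw [inner_sub_right, inner_sub_left]; ring
    rw [this]
    refine (abs_add_le _ _).trans ?_
    have h3 := abs_real_inner_le_norm l' (q' - q)
    have h4 := abs_real_inner_le_norm (l' - l) q
    have h5 : ‖l'‖ * ‖q' - q‖ ≤ (‖l‖ + δ) * D := by gcongr
    linarith
  have hC : |‖l'‖ ^ 2 - ‖l‖ ^ 2| ≤ δ * (2 * ‖l‖ + δ) := by
    have : ‖l'‖ ^ 2 - ‖l‖ ^ 2 = (‖l'‖ - ‖l‖) * (‖l'‖ + ‖l‖) := by ring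
    rw [this, abs_mul]
    have h3 : |‖l'‖ - ‖l‖| ≤ δ := by rw [abs_le]; constructor <;> linarith
    have h4 : |‖l'‖ + ‖l‖| ≤ 2 * ‖l‖ + δ := by rw [abs_of_nonneg (by positivity)]; linarith
    gcongr
  have hE : EE τ q' l' - EE τ q l = (1 / (2 * τ)) * (R' ^ 2 - R ^ 2)
      + (inner ℝ l' q' - inner ℝ l q) - τ / 2 * (‖l'‖ ^ 2 - ‖l‖ ^ 2) := by
    simp only [EE, ← hR, ← hR']
    ring
  rw [hE]
  refine (abs_sub _ _).trans ?_
  refine add_le_add ((abs_add_le _ _).trans (add_le_add ?_ hB)) ?_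
  · rw [abs_mul, abs_of_pos (by positivity)]
    gcongr
  · rw [abs_mul, abs_of_pos (by positivity)]
    gcongr

lemma const_conv {x : (p : ℕ) → Fin p → ℝ} {μ : Measure ℝ} 
    (hc : EmpConverges x μ)
    (h2 : Tendsto (fun p => (∑ i, (x p i) ^ 2) / (p : ℝ)) atTop (𝓝 (∫ t, t ^ 2 ∂μ)))
    {q : HH} (hq : IsQ μ q) :
    Tendsto (fun p => ‖emb (sortedAbs (x p)) - q‖) atTop (𝓝 0) := by
  have := W_main (X := fun p _ => x p) (fun p => continuous_const)
    (fun p i => integrable_const _) (ν := μ) (fun f => by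
      have h := ((hc f).sub_const (∫ t, f t ∂μ)).abs
      simpa using h) (by simpa using h2) hq
  simp only [integral_const, probReal_univ, one_smul] at this
  have h3 := (Real.continuous_sqrt.tendsto 0).comp this
  simpa [Function.comp_def] using h3

lemma gauss_sq_int : Integrable (fun z : ℝ => z ^ 2) (gaussianReal 0 1) :=
  (memLp_two_iff_integrable_sq (by fun_prop)).1 (memLp_id_gaussianReal' 2 (by simp))

lemma gauss_id_int : Integrable (fun z : ℝ => z) (gaussianReal 0 1) :=
  (memLp_id_gaussianReal' (μ := 0) (v := 1) 2 (by simp)).integrable (by norm_num)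

lemma gauss_sq_val : ∫ z : ℝ, z ^ 2 ∂(gaussianReal 0 1) = 1 := by
  have h := variance_fun_id_gaussianReal (μ := 0) (v := 1)
  rw [variance_eq_integral (by fun_prop)] at h
  simpa using h

lemma affine_sq_int (c b : ℝ) : Integrable (fun z : ℝ => (c * z + b) ^ 2) (gaussianReal 0 1) := by
  have : (fun z : ℝ => (c * z + b) ^ 2) = fun z => c ^ 2 * z ^ 2 + (2 * c * b) * z + b ^ 2 := by
    ext z; ring
  rw [this]
  exact ((gauss_sq_int.const_mul _).add (gauss_id_int.const_mul _)).add (integrable_const _)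

lemma affine_sq_val (c b : ℝ) :
    ∫ z : ℝ, (c * z + b) ^ 2 ∂(gaussianReal 0 1) = c ^ 2 + b ^ 2 := by
  have : (fun z : ℝ => (c * z + b) ^ 2) = fun z => c ^ 2 * z ^ 2 + (2 * c * b) * z + b ^ 2 := by
    ext z; ring
  have h1 := gauss_sq_int.const_mul (c ^ 2)
  have h2 := gauss_id_int.const_mul (2 * c * b)
  have h3 : Integrable (fun z : ℝ => c ^ 2 * z ^ 2 + (2 * c * b) * z) (gaussianReal 0 1) :=
    h1.add h2
  rw [this, integral_add h3 (integrable_const _), integral_add h1 h2, integral_const_mul,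
    integral_const_mul, gauss_sq_val, integral_id_gaussianReal]
  simp

/-- limit law of the entries of `c h + β` -/
noncomputable def limLaw (c : ℝ) (μ : Measure ℝ) : Measure ℝ :=
  (μ.prod (gaussianReal 0 1)).map fun z => c * z.2 + z.1

lemma limLaw_prob (c : ℝ) (μ : Measure ℝ) [IsProbabilityMeasure μ] :
    IsProbabilityMeasure (limLaw c μ) :=
  Measure.isProbabilityMeasure_map (by fun_prop)

lemma limLaw_sq (c : ℝ) (μ : Measure ℝ) [IsProbabilityMeasure μ]
    (h2 : Integrable (fun t => t ^ 2) μ) :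
    Integrable (fun t => t ^ 2) (limLaw c μ) ∧
      ∫ t, t ^ 2 ∂(limLaw c μ) = c ^ 2 + ∫ t, t ^ 2 ∂μ := by
  have hint : Integrable (fun z : ℝ × ℝ => (c * z.2 + z.1) ^ 2) (μ.prod (gaussianReal 0 1)) := by
    rw [integrable_prod_iff (by fun_prop)]
    refine ⟨Filter.Eventually.of_forall fun b => affine_sq_int c b, ?_⟩
    simp only [Real.norm_eq_abs, abs_pow, sq_abs, affine_sq_val]
    exact (integrable_const _).add h2
  refine ⟨?_, ?_⟩
  · rw [limLaw, integrable_map_measure (by fun_prop) (by fun_prop)]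
    exact hint
  · rw [limLaw, integral_map (by fun_prop) (by fun_prop), integral_prod _ hint]
    simp only [affine_sq_val]
    rw [integral_add (integrable_const _) h2]
    simp

/-- Gaussian smoothing of `f`. -/
lemma smooth_exists (c : ℝ) (f : BoundedContinuousFunction ℝ ℝ) :
    ∃ g : BoundedContinuousFunction ℝ ℝ, ∀ b, g b = ∫ z, f (c * z + b) ∂(gaussianReal 0 1) := by
  refine ⟨BoundedContinuousFunction.ofNormedAddCommGroup
    (fun b => ∫ z, f (c * z + b) ∂(gaussianReal 0 1)) ?_ ‖f‖ ?_, fun b => rfl⟩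
  · refine continuous_of_dominated (bound := fun _ => ‖f‖) ?_ ?_ (integrable_const _) ?_
    · intro b
      have : Continuous fun z => f (c * z + b) := by fun_prop
      exact this.aestronglyMeasurable
    · exact fun b => Filter.Eventually.of_forall fun z => f.norm_coe_le_norm _
    · exact Filter.Eventually.of_forall fun z => by fun_prop
  · intro b
    refine (norm_integral_le_of_norm_le_const
      (Filter.Eventually.of_forall fun z => f.norm_coe_le_norm _)).trans ?_
    simp

lemma gauss_conv (c : ℝ) {β : (p : ℕ) → Fin p → ℝ} {μ : Measure ℝ} [IsProbabilityMeasure μ]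
    (hc : EmpConverges β μ) (f : BoundedContinuousFunction ℝ ℝ) :
    Tendsto (fun p => ∫ h, |(∑ i, f (c * h i + β p i)) / (p:ℝ) - ∫ x, f x ∂(limLaw c μ)|
      ∂gaussPi p) atTop (𝓝 0) := by
  obtain ⟨g, hg⟩ := smooth_exists c f
  have hlim : ∫ x, f x ∂(limLaw c μ) = ∫ b, g b ∂μ := by
    have hf : Continuous fun z : ℝ × ℝ => f (c * z.2 + z.1) := by fun_prop
    rw [limLaw, integral_map (by fun_prop) f.continuous.aestronglyMeasurable, integral_prod]
    · simp only [hg]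
    · exact Integrable.of_bound hf.aestronglyMeasurable ‖f‖
        (Filter.Eventually.of_forall fun h => f.norm_coe_le_norm _)
  rw [hlim]
  have hup : Tendsto (fun p : ℕ => Real.sqrt (‖f‖ ^ 2 / p) +
      |(∑ i, g (β p i)) / (p:ℝ) - ∫ b, g b ∂μ|) atTop (𝓝 0) := by
    have h1 : Tendsto (fun p : ℕ => Real.sqrt (‖f‖ ^ 2 / p)) atTop (𝓝 0) := by
      have := (Real.continuous_sqrt.tendsto 0).comp
        (tendsto_const_div_atTop_nhds_zero_nat (‖f‖ ^ 2))
      simpa [Function.comp_def] using this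
    have h2 := ((hc g).sub_const (∫ b, g b ∂μ)).abs
    simpa using h1.add h2
  refine squeeze_zero' (Filter.Eventually.of_forall fun p => integral_nonneg fun h => abs_nonneg _)
    ?_ hup
  filter_upwards [eventually_gt_atTop 0] with p hp
  have hp' : (0 : ℝ) < p := by exact_mod_cast hp
  have hYc : ∀ i, Continuous fun h : Fin p → ℝ => f (c * h i + β p i) := fun i => by fun_prop
  have hYm : ∀ i, MemLp (fun h : Fin p → ℝ => f (c * h i + β p i)) 2 (gaussPi p) := fun i =>
    MemLp.of_bound (hYc i).aestronglyMeasurable ‖f‖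
      (Filter.Eventually.of_forall fun h => f.norm_coe_le_norm _)
  have hYi : ∀ i, Integrable (fun h : Fin p → ℝ => f (c * h i + β p i)) (gaussPi p) :=
    fun i => (hYm i).integrable (by norm_num)
  have hYe : ∀ i, ∫ h : Fin p → ℝ, f (c * h i + β p i) ∂gaussPi p = g (β p i) := by
    intro i
    have hc1 : Continuous fun z : ℝ => f (c * z + β p i) := by fun_prop
    rw [hg, gaussPi]
    exact integral_comp_eval (μ := fun _ : Fin p => gaussianReal 0 1) (i := i)
      (f := fun z => f (c * z + β p i)) hc1.aestronglyMeasurable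
  set S : (Fin p → ℝ) → ℝ := ∑ i, fun h : Fin p → ℝ => f (c * h i + β p i) with hS
  have hSa : ∀ h, S h = ∑ i, f (c * h i + β p i) := fun h => by simp [hS]
  have hSm : MemLp S 2 (gaussPi p) := memLp_finsetSum' _ fun i _ => hYm i
  have hSe : ∫ h, S h ∂gaussPi p = ∑ i, g (β p i) := by
    simp only [hSa]
    rw [integral_finsetSum _ fun i _ => hYi i]
    simp only [hYe]
  have hind : iIndepFun (fun (i : Fin p) (h : Fin p → ℝ) => f (c * h i + β p i)) (gaussPi p) := by
    refine iIndepFun_pi (μ := fun _ : Fin p => gaussianReal 0 1)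
      (X := fun i z => f (c * z + β p i)) fun i => ?_
    have hc1 : Continuous fun z : ℝ => f (c * z + β p i) := by fun_prop
    exact hc1.measurable.aemeasurable
  have hvar : variance S (gaussPi p) ≤ p * ‖f‖ ^ 2 := by
    rw [hS, IndepFun.variance_sum (fun i _ => hYm i) (fun i _ j _ hij => hind.indepFun hij)]
    calc _ ≤ ∑ i : Fin p, ‖f‖ ^ 2 := by
          refine Finset.sum_le_sum fun i _ => ?_
          have := variance_le_sq_of_bounded (μ := gaussPi p) (a := -‖f‖) (b := ‖f‖)
            (X := fun h : Fin p → ℝ => f (c * h i + β p i))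
            (Filter.Eventually.of_forall fun h => abs_le.1 (f.norm_coe_le_norm _))
            (hYc i).measurable.aemeasurable
          refine this.trans (le_of_eq ?_)
          ring
      _ = _ := by simp
  rw [variance_eq_integral hSm.aestronglyMeasurable.aemeasurable, hSe] at hvar
  have hZm : MemLp (fun h => (S h - ∑ i, g (β p i)) / (p:ℝ)) 2 (gaussPi p) := by
    have := (hSm.sub (memLp_const (∑ i, g (β p i)))).mul_const ((p:ℝ)⁻¹)
    simpa [div_eq_mul_inv] using this
  obtain ⟨hZ1, hZ2⟩ := int_abs_le_sqrt hZm.aestronglyMeasurable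
    ((memLp_two_iff_integrable_sq hZm.aestronglyMeasurable).1 hZm)
  have hZ3 : ∫ h, ((S h - ∑ i, g (β p i)) / (p:ℝ)) ^ 2 ∂gaussPi p ≤ ‖f‖ ^ 2 / p := by
    simp only [div_pow]
    rw [integral_div, div_le_div_iff₀ (by positivity) hp']
    nlinarith
  calc ∫ h, |(∑ i, f (c * h i + β p i)) / (p:ℝ) - ∫ b, g b ∂μ| ∂gaussPi p
      ≤ ∫ h, (|(S h - ∑ i, g (β p i)) / (p:ℝ)| + |(∑ i, g (β p i)) / (p:ℝ) - ∫ b, g b ∂μ|)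
          ∂gaussPi p := by
        refine integral_mono ?_ (hZ1.add (integrable_const _)) fun h => ?_
        · exact (((integrable_finsetSum _ fun i _ => hYi i).div_const _).sub
            (integrable_const _)).abs
        · simp only [hSa]
          refine le_trans (le_of_eq ?_) (abs_add_le _ _)
          congr 1
          ring
    _ = ∫ h, |(S h - ∑ i, g (β p i)) / (p:ℝ)| ∂gaussPi p
          + |(∑ i, g (β p i)) / (p:ℝ) - ∫ b, g b ∂μ| := by
        rw [integral_add hZ1 (integrable_const _)]
        simp
    _ ≤ _ := by
        gcongr
        exact hZ2.trans (Real.sqrt_le_sqrt hZ3)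

theorem statement18
    (β lam : (p : ℕ) → Fin p → ℝ)
    (μβ μlam : Measure ℝ)
    (hμβ : IsProbabilityMeasure μβ) (hμlam : IsProbabilityMeasure μlam)
    (hβconv : EmpConverges β μβ) (hlamconv : EmpConverges lam μlam)
    (hlam_nonneg : ∀ p i, 0 ≤ lam p i) (hlam_mono : ∀ p, Monotone (lam p))
    (hβ2int : Integrable (fun t => t ^ 2) μβ)
    (hβ2 : Tendsto (fun p => (∑ i, (β p i) ^ 2) / (p : ℝ)) atTop (𝓝 (∫ t, t ^ 2 ∂μβ)))
    (hlam2int : Integrable (fun t => t ^ 2) μlam)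
    (hlam2 : Tendsto (fun p => (∑ i, (lam p i) ^ 2) / (p : ℝ))
      atTop (𝓝 (∫ t, t ^ 2 ∂μlam))) :
    ∀ c τ : ℝ, 0 < τ →
      ∃ F : ℝ,
        Tendsto (fun p =>
          (∫ h, (moreauJ (lam p) (fun i => c * h i + β p i) τ - sortedL1 (lam p) (β p))
            ∂gaussPi p) / (p : ℝ)) atTop (𝓝 F) ∧
        ∀ ε : ℝ, 0 < ε →
          Tendsto (fun p => gaussPi p
            {h : Fin p → ℝ |
              ε ≤ |(moreauJ (lam p) (fun i => c * h i + β p i) τ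
                - sortedL1 (lam p) (β p)) / (p : ℝ) - F|})
            atTop (𝓝 0) := by
  intro c τ hτ
  have hνp := limLaw_prob c μβ
  obtain ⟨hν2, hνv⟩ := limLaw_sq c μβ hβ2int
  obtain ⟨q, hq⟩ := exists_IsQ (limLaw c μβ) hν2
  obtain ⟨b, hb⟩ := exists_IsQ μβ hβ2int
  obtain ⟨l, hl⟩ := exists_IsQ μlam hlam2int
  have hXc : ∀ p, Continuous fun (h : Fin p → ℝ) (i : Fin p) => c * h i + β p i :=
    fun p => by fun_prop
  have hXi : ∀ p (i : Fin p), Integrable (fun h : Fin p → ℝ => (c * h i + β p i) ^ 2)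
      (gaussPi p) := fun p i =>
    integrable_comp_eval (μ := fun _ : Fin p => gaussianReal 0 1) (i := i)
      (f := fun z => (c * z + β p i) ^ 2) (affine_sq_int c _)
  have hXv : ∀ p (i : Fin p), ∫ h : Fin p → ℝ, (c * h i + β p i) ^ 2 ∂gaussPi p
      = c ^ 2 + (β p i) ^ 2 := by
    intro p i
    rw [← affine_sq_val]
    exact integral_comp_eval (μ := fun _ : Fin p => gaussianReal 0 1) (i := i)
      (f := fun z => (c * z + β p i) ^ 2) (by fun_prop)
  have hX2 : Tendsto (fun p => ∫ h : Fin p → ℝ, (∑ i, (c * h i + β p i) ^ 2) / (p:ℝ) ∂gaussPi p)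
      atTop (𝓝 (∫ t, t ^ 2 ∂(limLaw c μβ))) := by
    rw [hνv]
    refine (hβ2.const_add (c ^ 2)).congr' ?_
    filter_upwards [eventually_gt_atTop 0] with p hp
    have hp' : (p : ℝ) ≠ 0 := by exact_mod_cast hp.ne'
    rw [integral_div, integral_finsetSum _ fun i _ => hXi p i]
    simp only [hXv, Finset.sum_add_distrib]
    simp
    field_simp
  have hD2 := W_main hXc hXi (fun f => gauss_conv c hβconv f) hX2 hq
  have hbc := const_conv hβconv hβ2 hb
  have hlc := const_conv hlamconv hlam2 hl
  have hsl : ∀ p, sortedAbs (lam p) = lam p := fun p =>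
    sortedAbs_of_perm _ _ (Equiv.refl _) (hlam_mono p) fun i => abs_of_nonneg (hlam_nonneg p i)
  simp only [hsl] at hlc
  -- deterministic part
  have hbt : Tendsto (fun p => emb (sortedAbs (β p))) atTop (𝓝 b) :=
    tendsto_iff_norm_sub_tendsto_zero.2 hbc
  have hlt : Tendsto (fun p => emb (lam p)) atTop (𝓝 l) :=
    tendsto_iff_norm_sub_tendsto_zero.2 hlc
  have hJ : Tendsto (fun p => inner ℝ (emb (lam p)) (emb (sortedAbs (β p)))) atTop
      (𝓝 (inner ℝ l b)) := hlt.inner hbt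
  set F := EE τ q l - inner ℝ l b with hF
  set G : (p : ℕ) → (Fin p → ℝ) → ℝ := fun p h =>
    EE τ (emb (sortedAbs fun i => c * h i + β p i)) (emb (lam p))
      - inner ℝ (emb (lam p)) (emb (sortedAbs (β p))) with hG
  have hGeq : ∀ p, 0 < p → ∀ h : Fin p → ℝ,
      (moreauJ (lam p) (fun i => c * h i + β p i) τ - sortedL1 (lam p) (β p)) / (p:ℝ) = G p h := by
    intro p hp h
    rw [sub_div, moreau_div hp hτ _ _ (hlam_nonneg p), sortedL1_div]
  set D : (p : ℕ) → (Fin p → ℝ) → ℝ := fun p h =>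
    ‖emb (sortedAbs fun i => c * h i + β p i) - q‖ with hD
  have hDc : ∀ p, Continuous fun h : Fin p → ℝ => emb (sortedAbs fun i => c * h i + β p i) :=
    fun p => continuous_emb.comp (continuous_sortedAbs.comp (hXc p))
  have hDc' : ∀ p, Continuous (D p) := fun p => ((hDc p).sub continuous_const).norm
  have hDi2 : ∀ p, Integrable (fun h => D p h ^ 2) (gaussPi p) :=
    fun p => (W_expand (hXc p) (hXi p) q).1
  have hDi : ∀ p, Integrable (D p) (gaussPi p) ∧
      ∫ h, D p h ∂gaussPi p ≤ Real.sqrt (∫ h, D p h ^ 2 ∂gaussPi p) := by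
    intro p
    have := int_abs_le_sqrt (hDc' p).aestronglyMeasurable (hDi2 p)
    simpa [hD] using this
  have hD1 : Tendsto (fun p => ∫ h, D p h ∂gaussPi p) atTop (𝓝 0) := by
    have h3 := (Real.continuous_sqrt.tendsto 0).comp hD2
    rw [Real.sqrt_zero] at h3
    exact squeeze_zero (fun p => integral_nonneg fun h => norm_nonneg _) (fun p => (hDi p).2) h3
  set R := Metric.infDist (q - τ • l) KK with hR
  set δ : ℕ → ℝ := fun p => ‖emb (lam p) - l‖ with hδ
  set A : ℕ → ℝ := fun p => (1 / (2 * τ)) * (τ * δ p * (2 * R + τ * δ p)) + δ p * ‖q‖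
    + τ / 2 * (δ p * (2 * ‖l‖ + δ p))
    + |inner ℝ (emb (lam p)) (emb (sortedAbs (β p))) - inner ℝ l b| with hA
  set B : ℕ → ℝ := fun p => (1 / (2 * τ)) * (2 * R + 2 * (τ * δ p)) + (‖l‖ + δ p) with hB
  have hAt : Tendsto A atTop (𝓝 0) := by
    have h1 := (hJ.sub_const (inner ℝ l b)).abs
    have hc : Continuous fun d : ℝ => (1 / (2 * τ)) * (τ * d * (2 * R + τ * d)) + d * ‖q‖
      + τ / 2 * (d * (2 * ‖l‖ + d)) := by fun_prop
    have h2 := ((hc.tendsto 0).comp hlc).add h1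
    simp only [mul_zero, zero_mul, add_zero, sub_self, abs_zero] at h2
    exact h2
  have hBt : Tendsto B atTop (𝓝 ((1 / (2 * τ)) * (2 * R + 2 * (τ * 0)) + (‖l‖ + 0))) := by
    have hc : Continuous fun d : ℝ => (1 / (2 * τ)) * (2 * R + 2 * (τ * d)) + (‖l‖ + d) := by
      fun_prop
    exact (hc.tendsto 0).comp hlc
  have hbound : ∀ p h, |G p h - F| ≤ A p + B p * D p h + (1 / (2 * τ)) * D p h ^ 2 := by
    intro p h
    have h1 := EE_bound hτ q l (emb (sortedAbs fun i => c * h i + β p i)) (emb (lam p))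
    have h2 : G p h - F = (EE τ (emb (sortedAbs fun i => c * h i + β p i)) (emb (lam p))
        - EE τ q l) - (inner ℝ (emb (lam p)) (emb (sortedAbs (β p))) - inner ℝ l b) := by
      rw [hG, hF]; ring
    rw [h2]
    refine (abs_sub _ _).trans ?_
    refine (add_le_add_left h1 _).trans (le_of_eq ?_)
    simp only [hA, hB, hD, hδ, hR]
    ring
  have hGc : ∀ p, Continuous (G p) := by
    intro p
    have hcd : Continuous fun x : HH => Metric.infDist x KK := Metric.continuous_infDist_pt KK
    have h1 := hDc p
    have h2 : Continuous fun h : Fin p → ℝ =>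
        Metric.infDist (emb (sortedAbs fun i => c * h i + β p i) - τ • emb (lam p)) KK :=
      hcd.comp (h1.sub continuous_const)
    have h3 : Continuous fun h : Fin p → ℝ =>
        (inner ℝ (emb (lam p)) (emb (sortedAbs fun i => c * h i + β p i)) : ℝ) :=
      continuous_const.inner h1
    simp only [hG, EE]
    exact ((((h2.pow 2).const_mul _).add h3).sub continuous_const).sub continuous_const
  have hbi : ∀ p, Integrable (fun h => A p + B p * D p h + (1 / (2 * τ)) * D p h ^ 2)
      (gaussPi p) := fun p =>
    ((integrable_const _).add ((hDi p).1.const_mul _)).add ((hDi2 p).const_mul _)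
  have hGFi : ∀ p, Integrable (fun h => |G p h - F|) (gaussPi p) := by
    intro p
    refine (hbi p).mono' ((hGc p).sub continuous_const).abs.aestronglyMeasurable ?_
    filter_upwards with h
    rw [Real.norm_eq_abs, abs_abs]
    exact hbound p h
  have hL1 : Tendsto (fun p => ∫ h, |G p h - F| ∂gaussPi p) atTop (𝓝 0) := by
    have hup : Tendsto (fun p => A p + B p * ∫ h, D p h ∂gaussPi p
        + (1 / (2 * τ)) * ∫ h, D p h ^ 2 ∂gaussPi p) atTop (𝓝 0) := by
      have := (hAt.add (hBt.mul hD1)).add (hD2.const_mul (1 / (2 * τ)))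
      simpa only [mul_zero, add_zero] using this
    refine squeeze_zero (fun p => integral_nonneg fun h => abs_nonneg _) (fun p => ?_) hup
    refine (integral_mono (hGFi p) (hbi p) (hbound p)).trans (le_of_eq ?_)
    have h1 : Integrable (fun h => B p * D p h) (gaussPi p) := (hDi p).1.const_mul _
    have h2 : Integrable (fun h => A p + B p * D p h) (gaussPi p) := (integrable_const _).add h1
    rw [integral_add h2 ((hDi2 p).const_mul _), integral_add (integrable_const _) h1,
      integral_const_mul, integral_const_mul]
    simp
  refine ⟨F, ?_, ?_⟩
  · rw [tendsto_iff_dist_tendsto_zero]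
    refine squeeze_zero' (Filter.Eventually.of_forall fun p => dist_nonneg) ?_ hL1
    filter_upwards [eventually_gt_atTop 0] with p hp
    rw [← integral_div, Real.dist_eq]
    simp only [hGeq p hp]
    have hsub : Integrable (fun h => G p h - F) (gaussPi p) :=
      (integrable_norm_iff ((hGc p).sub continuous_const).aestronglyMeasurable).1 (hGFi p)
    have hGi : Integrable (G p) (gaussPi p) := by
      have := hsub.add (integrable_const F)
      refine this.congr (Filter.Eventually.of_forall fun h => ?_)
      simp
    have h1 : ∫ h, G p h ∂gaussPi p - F = ∫ h, (G p h - F) ∂gaussPi p := by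
      rw [integral_sub hGi (integrable_const _)]
      simp
    rw [h1]
    exact abs_integral_le_integral_abs
  · intro ε hε
    have hup : Tendsto (fun p => ENNReal.ofReal ((∫ h, |G p h - F| ∂gaussPi p) / ε)) atTop
        (𝓝 0) := by
      have := ENNReal.tendsto_ofReal (hL1.div_const ε)
      simpa using this
    refine tendsto_of_tendsto_of_tendsto_of_le_of_le' tendsto_const_nhds hup
      (Filter.Eventually.of_forall fun p => zero_le) ?_
    filter_upwards [eventually_gt_atTop 0] with p hp
    simp only [hGeq p hp]
    have h1 := mul_meas_ge_le_integral_of_nonneg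
      (Filter.Eventually.of_forall fun h => abs_nonneg (G p h - F)) (hGFi p) ε
    rw [← ofReal_measureReal]
    apply ENNReal.ofReal_le_ofReal
    rw [le_div_iff₀ hε, mul_comm]
    exact h1
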